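/- With 𝒢 as above, there exist constants c₄ > c₃ > 0 and c₃* > 0, all independent of α, such that for s₀ = 2 c₃* α^σ and all s ∈ (0, s₀]: c₃ α^{3/(3+2σ)} s^{−(1+2σ)/(3+2σ)} ≤ 𝒢''(s) ≤ c₄ α^{3/(3+2σ)} s^{−(1+2σ)/(3+2σ)}. -/

import Mathlib

/-- `G(ε) = ∫₀^∞ ξ² (max(α − ε√(1+ξ²), 0))^{σ+1} dξ` (for `ε > 0`). -/
noncomputable def Gfun (σ α ε : ℝ) : ℝ :=
  ∫ ξ in Set.Ioi (0:ℝ), ξ ^ 2 * (max (α - ε * Real.sqrt (1 + ξ ^ 2)) 0) ^ (σ + 1)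

/-- `G'(ε) = −(σ+1) ∫₀^∞ ξ² √(1+ξ²) (max(α − ε√(1+ξ²), 0))^σ dξ`. -/
noncomputable def GderivFun (σ α ε : ℝ) : ℝ :=
  -(σ + 1) * ∫ ξ in Set.Ioi (0:ℝ),
    ξ ^ 2 * Real.sqrt (1 + ξ ^ 2) * (max (α - ε * Real.sqrt (1 + ξ ^ 2)) 0) ^ σ

/-- Legendre transform of `G`, the supremum being taken over `ε > 0`. -/
noncomputable def GhatFun (σ α u : ℝ) : ℝ :=
  sSup {y : ℝ | ∃ ε : ℝ, 0 < ε ∧ y = ε * u - Gfun σ α ε}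

/-- `𝒢(s) = Ĝ(−s)`. -/
noncomputable def calG (σ α s : ℝ) : ℝ := GhatFun σ α (-s)

/-!
Scaling reduces everything to `α = 1`, where `𝒢''(s) = 1 / G''(e)` at the point `e` with
`G'(e) = -s`. Put `τ = 1 / e - 1`. The substitution `√(1 + ξ²) = 1 + τ x` gives, for `0 < e < 1`,
`-G'(e) = (σ + 1) (1 - e) ^ (σ + 3/2) e ^ (-3/2) N(τ)` with
`N(τ) = ∫₀¹ √x (1 - x) ^ σ (1 + τ x)² √(2 + τ x) dx`. Since `N` is positive and increasing with
logarithmic derivative at most `5/2`, away from `e = 0` the slope `s = -G'(e)` is comparable to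
`(1 - e) ^ (σ + 3/2)` and `G''(e)` to `s / (1 - e)`. Eliminating `1 - e` gives the power of `s`,
and `N(τ) ≥ c (1 + τ) ^ (5/2)` gives the factor `e⁻⁴` in the bound on `G'`.
-/

open Filter MeasureTheory Set Topology

section HalfLineLegendre

/-- The Legendre transform `u ↦ sup_{ε > 0} (ε u - g ε)` of a function on `(0, ∞)`, of which
`GhatFun` is an instance. It takes the junk value `0` where the supremum is infinite. -/
noncomputable def legendreIoi (g : ℝ → ℝ) (u : ℝ) : ℝ :=
  sSup {y : ℝ | ∃ ε : ℝ, 0 < ε ∧ y = ε * u - g ε}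

variable {f g : ℝ → ℝ} {s : Set ℝ} {e u x : ℝ}

lemma image_mem_nhds_of_strictMonoOn (hf : StrictMonoOn f s) (hc : ContinuousOn f s)
    (hs : s ∈ 𝓝 x) : f '' s ∈ 𝓝 (f x) := by
  obtain ⟨a, b, -, hab, hsub⟩ := exists_Icc_mem_subset_of_mem_nhds hs
  obtain ⟨hax, hxb⟩ := Icc_mem_nhds_iff.1 hab
  have hmem : ∀ {y}, a ≤ y → y ≤ b → y ∈ s := fun h h' => hsub ⟨h, h'⟩
  have himage : Icc (f a) (f b) ⊆ f '' s :=
    (intermediate_value_Icc (hax.trans hxb).le (hc.mono hsub)).trans (image_mono hsub)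
  exact mem_of_superset (Icc_mem_nhds
    (hf (hmem le_rfl (hax.trans hxb).le) (hmem hax.le hxb.le) hax)
    (hf (hmem hax.le hxb.le) (hmem (hax.trans hxb).le le_rfl) hxb)) himage

lemma hasDerivAt_invFunOn_of_strictMonoOn {f' : ℝ} (hf : StrictMonoOn f s)
    (hc : ContinuousOn f s) (hs : s ∈ 𝓝 x) (hd : HasDerivAt f f' x) (hf' : f' ≠ 0) :
    HasDerivAt (Function.invFunOn f s) f'⁻¹ (f x) := by
  set φ := Function.invFunOn f s
  have hleft : ∀ y ∈ s, φ (f y) = y := hf.injOn.leftInvOn_invFunOn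
  have hφx : φ (f x) = x := hleft x (mem_of_mem_nhds hs)
  have himage : f '' s ∈ 𝓝 (f x) := image_mem_nhds_of_strictMonoOn hf hc hs
  have hmono : MonotoneOn φ (f '' s) := by
    rintro _ ⟨y, hy, rfl⟩ _ ⟨z, hz, rfl⟩ hyz
    rwa [hleft y hy, hleft z hz, ← hf.le_iff_le hy hz]
  have hcont : ContinuousAt φ (f x) := by
    refine continuousAt_of_monotoneOn_of_image_mem_nhds hmono himage ?_
    rw [hf.injOn.leftInvOn_invFunOn.image_image, hφx]
    exact hs
  refine HasDerivAt.of_local_left_inverse hcont (by rwa [hφx]) hf' ?_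
  filter_upwards [himage] with y hy using Function.invFunOn_eq hy

lemma legendreIoi_eq_of_hasDerivAt (hg : ConvexOn ℝ (Ioi 0) g) (he : 0 < e)
    (hd : HasDerivAt g u e) : legendreIoi g u = e * u - g e := by
  refine IsGreatest.csSup_eq ⟨⟨e, he, rfl⟩, ?_⟩
  rintro _ ⟨y, hy, rfl⟩
  rcases lt_trichotomy y e with h | rfl | h
  · have hslope := hg.slope_le_of_hasDerivAt hy he h hd
    rw [slope_def_field, div_le_iff₀ (sub_pos.2 h)] at hslope
    linarith
  · exact le_rfl
  · have hslope := hg.le_slope_of_hasDerivAt he hy h hd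
    rw [slope_def_field, le_div_iff₀ (sub_pos.2 h)] at hslope
    linarith

lemma hasDerivAt_legendreIoi {φ : ℝ → ℝ} (hg : ConvexOn ℝ (Ioi 0) g)
    (hφ : ∀ᶠ v in 𝓝 u, 0 < φ v ∧ HasDerivAt g v (φ v)) (hd : DifferentiableAt ℝ φ u) :
    HasDerivAt (legendreIoi g) (φ u) u := by
  have hgφ := hφ.self_of_nhds.2.comp u hd.hasDerivAt
  refine (((hd.hasDerivAt.mul (hasDerivAt_id u)).sub hgφ).congr_deriv
    (by simp only [id]; ring)).congr_of_eventuallyEq ?_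
  filter_upwards [hφ] with v ⟨hpos, hv⟩ using legendreIoi_eq_of_hasDerivAt hg hpos hv

lemma deriv_deriv_legendreIoi {g' : ℝ → ℝ} (hg : ConvexOn ℝ (Ioi 0) g) (hs : IsOpen s)
    (hsconv : Convex ℝ s) (hspos : s ⊆ Ioi 0) (hd : ∀ e ∈ s, HasDerivAt g (g' e) e)
    (hd' : ∀ e ∈ s, 0 < deriv g' e) (he : e ∈ s) :
    deriv (deriv (legendreIoi g)) (g' e) = (deriv g' e)⁻¹ := by
  have hdiff : ∀ x ∈ s, DifferentiableAt ℝ g' x := fun x hx =>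
    differentiableAt_of_deriv_ne_zero (hd' x hx).ne'
  have hcont : ContinuousOn g' s := fun x hx => (hdiff x hx).continuousAt.continuousWithinAt
  have hmono : StrictMonoOn g' s := strictMonoOn_of_deriv_pos hsconv hcont fun x hx =>
    hd' x (interior_subset hx)
  set φ := Function.invFunOn g' s
  have hφ : ∀ x ∈ s, HasDerivAt φ (deriv g' x)⁻¹ (g' x) := fun x hx =>
    hasDerivAt_invFunOn_of_strictMonoOn hmono hcont (hs.mem_nhds hx) (hdiff x hx).hasDerivAt
      (hd' x hx).ne'
  have himage : ∀ x ∈ s, ∀ᶠ v in 𝓝 (g' x), v ∈ g' '' s := fun x hx =>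
    image_mem_nhds_of_strictMonoOn hmono hcont (hs.mem_nhds hx)
  have hfirst : ∀ x ∈ s, deriv (legendreIoi g) (g' x) = φ (g' x) := by
    refine fun x hx => (hasDerivAt_legendreIoi hg ?_ (hφ x hx).differentiableAt).deriv
    filter_upwards [himage x hx] with v hv
    have hφv := hd (φ v) (Function.invFunOn_mem hv)
    rw [Function.invFunOn_eq hv] at hφv
    exact ⟨hspos (Function.invFunOn_mem hv), hφv⟩
  have heq : deriv (legendreIoi g) =ᶠ[𝓝 (g' e)] φ := by
    filter_upwards [himage e he]
    rintro _ ⟨x, hx, rfl⟩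
    exact hfirst x hx
  rw [heq.deriv_eq, (hφ e he).deriv]

open scoped Pointwise in
lemma legendreIoi_const_mul_comp_div {a c : ℝ} (ha : 0 < a) (hc : 0 < c) (g : ℝ → ℝ) (u : ℝ) :
    legendreIoi (fun ε => c * g (ε / a)) u = c * legendreIoi g (a / c * u) := by
  unfold legendreIoi
  rw [← smul_eq_mul c (sSup _), ← Real.sSup_smul_of_nonneg hc.le]
  congr 1
  ext y
  simp only [mem_smul_set, mem_ofPred_eq, smul_eq_mul]
  constructor
  · rintro ⟨ε, hε, rfl⟩
    exact ⟨_, ⟨ε / a, by positivity, rfl⟩, by field_simp⟩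
  · rintro ⟨_, ⟨ε, hε, rfl⟩, rfl⟩
    exact ⟨a * ε, by positivity, by rw [mul_div_cancel_left₀ _ ha.ne']; field_simp⟩

end HalfLineLegendre

section Energy

variable {σ α e : ℝ}

lemma hasDerivAt_max_zero_rpow {p : ℝ} (hp : 1 < p) (x : ℝ) :
    HasDerivAt (fun y : ℝ => max y 0 ^ p) (p * max x 0 ^ (p - 1)) x := by
  have hp0 : 0 < p := one_pos.trans hp
  have hp1 : 0 < p - 1 := sub_pos.2 hp
  refine hasDerivAt_of_hasDerivAt_of_ne' (x := 0) (g := fun y => p * max y 0 ^ (p - 1))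
    (fun y hy => ?_) ?_ ?_ x
  · rcases hy.lt_or_gt with hy | hy
    · rw [max_eq_right hy.le, Real.zero_rpow hp1.ne', mul_zero]
      refine (hasDerivAt_const y (0 : ℝ)).congr_of_eventuallyEq ?_
      filter_upwards [Iio_mem_nhds hy] with z hz
      rw [max_eq_right (le_of_lt hz), Real.zero_rpow hp0.ne']
    · rw [max_eq_left hy.le]
      refine (Real.hasDerivAt_rpow_const (Or.inl hy.ne')).congr_of_eventuallyEq ?_
      filter_upwards [Ioi_mem_nhds hy] with z hz
      rw [max_eq_left (le_of_lt hz)]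
  · exact ((continuous_id.max continuous_const).rpow_const fun _ => Or.inr hp0.le).continuousAt
  · exact (((continuous_id.max continuous_const).rpow_const
      fun _ => Or.inr hp1.le).const_mul p).continuousAt

lemma integrableOn_mul_max_rpow {f : ℝ → ℝ} (hf : Continuous f) {p : ℝ} (hp : 0 < p) (α : ℝ)
    (he : 0 < e) :
    IntegrableOn (fun ξ => f ξ * max (α - e * √(1 + ξ ^ 2)) 0 ^ p) (Ioi 0) := by
  have hcont : Continuous fun ξ => f ξ * max (α - e * √(1 + ξ ^ 2)) 0 ^ p :=
    hf.mul ((by fun_prop : Continuous fun ξ : ℝ => max (α - e * √(1 + ξ ^ 2)) 0).rpow_const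
      fun _ => Or.inr hp.le)
  refine (hcont.integrableOn_Icc (a := 0) (b := α / e)).of_forall_sdiff_eq_zero
    measurableSet_Ioi fun ξ hξ => ?_
  have hlarge : α < e * ξ := by
    rw [← div_lt_iff₀' he]
    exact lt_of_not_ge fun h => hξ.2 ⟨le_of_lt hξ.1, h⟩
  have hsqrt : e * ξ ≤ e * √(1 + ξ ^ 2) :=
    mul_le_mul_of_nonneg_left (Real.le_sqrt_of_sq_le (by linarith)) he.le
  rw [max_eq_right (by linarith), Real.zero_rpow hp.ne', mul_zero]

lemma integrableOn_GderivFun_integrand (hσ : 0 < σ) (α : ℝ) (he : 0 < e) :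
    IntegrableOn (fun ξ => ξ ^ 2 * √(1 + ξ ^ 2) * max (α - e * √(1 + ξ ^ 2)) 0 ^ σ) (Ioi 0) :=
  integrableOn_mul_max_rpow (by fun_prop) hσ α he

lemma GderivFun_integrand_anti (hσ : 0 ≤ σ) (α ξ : ℝ) :
    Antitone fun e => ξ ^ 2 * √(1 + ξ ^ 2) * max (α - e * √(1 + ξ ^ 2)) 0 ^ σ := by
  intro a b hab
  dsimp only
  gcongr

lemma hasDerivAt_Gfun (hσ : 0 < σ) (α : ℝ) (he : 0 < e) :
    HasDerivAt (Gfun σ α) (GderivFun σ α e) e := by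
  set F' : ℝ → ℝ → ℝ := fun y ξ => ξ ^ 2 * √(1 + ξ ^ 2) * max (α - y * √(1 + ξ ^ 2)) 0 ^ σ
    with hF'
  have hF'_nonneg : ∀ y ξ, 0 ≤ F' y ξ := fun y ξ => by positivity
  have hF'_int : ∀ {y}, 0 < y → IntegrableOn (F' y) (Ioi 0) :=
    integrableOn_GderivFun_integrand hσ α
  have hF_int : ∀ {y}, 0 < y →
      IntegrableOn (fun ξ => ξ ^ 2 * max (α - y * √(1 + ξ ^ 2)) 0 ^ (σ + 1)) (Ioi 0) :=
    integrableOn_mul_max_rpow (by fun_prop) (by positivity) α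
  have hbound : ∀ ξ, ∀ y ∈ Ioi (e / 2), ‖-(σ + 1) * F' y ξ‖ ≤ (σ + 1) * F' (e / 2) ξ := by
    intro ξ y hy
    rw [neg_mul, norm_neg, Real.norm_of_nonneg (mul_nonneg (by positivity) (hF'_nonneg y ξ))]
    exact mul_le_mul_of_nonneg_left (GderivFun_integrand_anti hσ.le α ξ (le_of_lt hy))
      (by positivity)
  have hdiff : ∀ ξ y : ℝ, HasDerivAt
      (fun y => ξ ^ 2 * max (α - y * √(1 + ξ ^ 2)) 0 ^ (σ + 1)) (-(σ + 1) * F' y ξ) y := by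
    intro ξ y
    have hlin : HasDerivAt (fun y : ℝ => α - y * √(1 + ξ ^ 2)) (-√(1 + ξ ^ 2)) y := by
      simpa using ((hasDerivAt_id y).mul_const √(1 + ξ ^ 2)).const_sub α
    refine (((hasDerivAt_max_zero_rpow (by linarith) _).comp y hlin).const_mul
      (ξ ^ 2)).congr_deriv ?_
    rw [add_sub_cancel_right, hF']
    ring
  have hderiv := (hasDerivAt_integral_of_dominated_loc_of_deriv_le
    (Ioi_mem_nhds (half_lt_self he))
    (eventually_of_mem (Ioi_mem_nhds he) fun y hy => (hF_int hy).aestronglyMeasurable)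
    (hF_int he) ((hF'_int he).const_mul _).aestronglyMeasurable
    (Eventually.of_forall hbound) ((hF'_int (half_pos he)).const_mul _)
    (Eventually.of_forall fun ξ y _ => hdiff ξ y)).2
  rwa [integral_const_mul] at hderiv

lemma monotoneOn_GderivFun (hσ : 0 < σ) (α : ℝ) : MonotoneOn (GderivFun σ α) (Ioi 0) := by
  intro a ha b hb hab
  refine mul_le_mul_of_nonpos_left ?_ (by linarith)
  exact integral_mono (integrableOn_GderivFun_integrand hσ α hb)
    (integrableOn_GderivFun_integrand hσ α ha) fun ξ => GderivFun_integrand_anti hσ.le α ξ hab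

lemma convexOn_Gfun (hσ : 0 < σ) (α : ℝ) : ConvexOn ℝ (Ioi 0) (Gfun σ α) := by
  have hd : ∀ e ∈ Ioi (0 : ℝ), HasDerivAt (Gfun σ α) (GderivFun σ α e) e := fun _ =>
    hasDerivAt_Gfun hσ α
  refine MonotoneOn.convexOn_of_deriv (convex_Ioi 0)
    (fun e he => (hd e he).continuousAt.continuousWithinAt) ?_ ?_ <;> rw [interior_Ioi]
  · exact fun e he => (hd e he).differentiableAt.differentiableWithinAt
  · exact (monotoneOn_GderivFun hσ α).congr fun e he => (hd e he).deriv.symm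

lemma max_sub_rpow_scaling (hα : 0 < α) (ε w p : ℝ) :
    max (α - ε * w) 0 ^ p = α ^ p * max (1 - ε / α * w) 0 ^ p := by
  rw [← Real.mul_rpow hα.le (le_max_right _ _), mul_max_of_nonneg _ _ hα.le, mul_zero]
  congr 2
  field_simp

lemma Gfun_scaling (σ : ℝ) (hα : 0 < α) (ε : ℝ) :
    Gfun σ α ε = α ^ (σ + 1) * Gfun σ 1 (ε / α) := by
  simp only [Gfun, max_sub_rpow_scaling hα, mul_left_comm _ (α ^ (σ + 1)), integral_const_mul]

lemma GderivFun_scaling (σ : ℝ) (hα : 0 < α) (ε : ℝ) :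
    GderivFun σ α ε = α ^ σ * GderivFun σ 1 (ε / α) := by
  simp only [GderivFun, max_sub_rpow_scaling hα, mul_left_comm _ (α ^ σ), integral_const_mul]

lemma calG_scaling (σ : ℝ) (hα : 0 < α) (s : ℝ) :
    calG σ α s = α ^ (σ + 1) * legendreIoi (Gfun σ 1) (-α ^ (-σ) * s) := by
  have hpow : α / α ^ (σ + 1) = α ^ (-σ) := by
    rw [Real.rpow_add_one hα.ne', Real.rpow_neg hα.le]
    field_simp
  calc calG σ α s = legendreIoi (fun ε => α ^ (σ + 1) * Gfun σ 1 (ε / α)) (-s) := by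
        simp only [← Gfun_scaling σ hα]
        rfl
    _ = _ := by
        rw [legendreIoi_const_mul_comp_div hα (by positivity), hpow, mul_neg, neg_mul]

lemma deriv_deriv_calG_scaling (σ : ℝ) (hα : 0 < α) (s : ℝ) :
    deriv (deriv (calG σ α)) s =
      α ^ (1 - σ) * deriv (deriv (legendreIoi (Gfun σ 1))) (-α ^ (-σ) * s) := by
  have hpow : α ^ (1 - σ) = α ^ (σ + 1) * (-α ^ (-σ)) * (-α ^ (-σ)) := by
    rw [mul_assoc, neg_mul_neg, ← Real.rpow_add hα, ← Real.rpow_add hα]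
    ring_nf
  have hfirst : deriv (calG σ α) = fun s =>
      α ^ (σ + 1) * (-α ^ (-σ)) * deriv (legendreIoi (Gfun σ 1)) (-α ^ (-σ) * s) := by
    funext s
    rw [funext (calG_scaling σ hα), deriv_const_mul_field, deriv_comp_mul_left, smul_eq_mul,
      mul_assoc]
  rw [hfirst, deriv_const_mul_field, deriv_comp_mul_left, smul_eq_mul, hpow, ← mul_assoc]

end Energy

section Profile

variable {σ τ x : ℝ}

/-- The factor `(w² √(w² - 1)) / √(w - 1)`, `w = 1 + τ x`, of the energy density in the variable
`x = (√(1 + ξ²) - 1) / τ`; it is smooth up to the threshold `x = 0`. -/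
noncomputable def profileKernel (τ x : ℝ) : ℝ := (1 + τ * x) ^ 2 * √(2 + τ * x)

/-- The partial derivative of `profileKernel` in `τ`, with the logarithmic derivative factored
out. -/
noncomputable def profileKernelDeriv (τ x : ℝ) : ℝ :=
  profileKernel τ x * (2 * x / (1 + τ * x) + x / (2 * (2 + τ * x)))

/-- The factor of `G'` that stays positive and smooth as `ε` approaches the threshold `α`,
where `τ = α / ε - 1` vanishes. -/
noncomputable def profile (σ τ : ℝ) : ℝ :=
  ∫ x in (0 : ℝ)..1, √x * (1 - x) ^ σ * profileKernel τ x

lemma continuous_profileKernel_uncurry : Continuous (Function.uncurry profileKernel) := by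
  unfold Function.uncurry profileKernel
  fun_prop

lemma continuous_profile_weight (hσ : 0 ≤ σ) : Continuous fun x : ℝ => √x * (1 - x) ^ σ :=
  Real.continuous_sqrt.mul ((continuous_const.sub continuous_id).rpow_const fun _ => Or.inr hσ)

lemma intervalIntegrable_profile (hσ : 0 ≤ σ) (τ : ℝ) :
    IntervalIntegrable (fun x => √x * (1 - x) ^ σ * profileKernel τ x) volume 0 1 :=
  ((continuous_profile_weight hσ).mul
    (continuous_profileKernel_uncurry.comp (by fun_prop : Continuous fun x => (τ, x)))
    ).intervalIntegrable 0 1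

lemma profile_weight_nonneg (σ : ℝ) (hx : x ∈ Icc (0 : ℝ) 1) : 0 ≤ √x * (1 - x) ^ σ :=
  mul_nonneg (Real.sqrt_nonneg x) (Real.rpow_nonneg (sub_nonneg.2 hx.2) σ)

lemma continuous_profile (hσ : 0 ≤ σ) : Continuous (profile σ) := by
  refine intervalIntegral.continuous_parametric_intervalIntegral_of_continuous' ?_ 0 1
  exact ((continuous_profile_weight hσ).comp continuous_snd).mul continuous_profileKernel_uncurry

lemma profileKernel_mono {a b : ℝ} (ha : 0 ≤ a) (hab : a ≤ b) (hx : 0 ≤ x) :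
    profileKernel a x ≤ profileKernel b x := by
  unfold profileKernel
  gcongr

lemma monotoneOn_profile (hσ : 0 ≤ σ) : MonotoneOn (profile σ) (Ici 0) := fun a ha b _ hab =>
  intervalIntegral.integral_mono_on zero_le_one (intervalIntegrable_profile hσ a)
    (intervalIntegrable_profile hσ b) fun _ hx =>
      mul_le_mul_of_nonneg_left (profileKernel_mono ha hab hx.1) (profile_weight_nonneg σ hx)

lemma rpow_five_halves_le_profileKernel (hτ : 0 ≤ τ) (hx : x ∈ Icc (0 : ℝ) 1) :
    (1 + τ) ^ (5 / 2 : ℝ) * x ^ (5 / 2 : ℝ) ≤ profileKernel τ x := by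
  obtain ⟨hx0, hx1⟩ := hx
  have hle : (1 + τ) * x ≤ 1 + τ * x := by linarith
  have hpow : ∀ y : ℝ, 0 ≤ y → y ^ (5 / 2 : ℝ) = y ^ 2 * √y := fun y hy => by
    rw [Real.sqrt_eq_rpow, ← Real.rpow_natCast, ← Real.rpow_add_of_nonneg hy] <;> norm_num
  rw [← Real.mul_rpow (by positivity) hx0, hpow _ (by positivity)]
  unfold profileKernel
  gcongr
  linarith

lemma exists_mul_rpow_five_halves_le_profile (hσ : 0 ≤ σ) :
    ∃ c, 0 < c ∧ ∀ τ, 0 ≤ τ → c * (1 + τ) ^ (5 / 2 : ℝ) ≤ profile σ τ := by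
  have hint : IntervalIntegrable (fun x => √x * (1 - x) ^ σ * x ^ (5 / 2 : ℝ)) volume 0 1 :=
    ((continuous_profile_weight hσ).mul
      (Real.continuous_rpow_const (by norm_num))).intervalIntegrable 0 1
  refine ⟨∫ x in (0 : ℝ)..1, √x * (1 - x) ^ σ * x ^ (5 / 2 : ℝ), ?_, fun τ hτ => ?_⟩
  · refine intervalIntegral.intervalIntegral_pos_of_pos_on hint (fun x hx => ?_) one_pos
    have hx0 : 0 < x := hx.1
    have hx1 : 0 < 1 - x := sub_pos.2 hx.2
    positivity
  · rw [← intervalIntegral.integral_mul_const]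
    refine intervalIntegral.integral_mono_on zero_le_one (hint.mul_const _)
      (intervalIntegrable_profile hσ τ) fun x hx => ?_
    rw [mul_assoc, mul_comm (x ^ _)]
    exact mul_le_mul_of_nonneg_left (rpow_five_halves_le_profileKernel hτ hx)
      (profile_weight_nonneg σ hx)

lemma profile_pos (hσ : 0 ≤ σ) (hτ : 0 ≤ τ) : 0 < profile σ τ := by
  obtain ⟨c, hc, hle⟩ := exists_mul_rpow_five_halves_le_profile hσ
  exact (by positivity : 0 < c * (1 + τ) ^ (5 / 2 : ℝ)).trans_le (hle τ hτ)

lemma hasDerivAt_profileKernel (hτx : -1 < τ * x) :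
    HasDerivAt (fun t => profileKernel t x) (profileKernelDeriv τ x) τ := by
  have h1 : 1 + τ * x ≠ 0 := by linarith
  have h2 : 0 < 2 + τ * x := by linarith
  have hlin : ∀ c : ℝ, HasDerivAt (fun t => c + t * x) x τ := fun c => by
    simpa using ((hasDerivAt_id τ).mul_const x).const_add c
  refine (((hlin 1).fun_pow 2).mul ((hlin 2).sqrt h2.ne')).congr_deriv ?_
  have hsqrt : x / (2 * √(2 + τ * x)) = √(2 + τ * x) * (x / (2 * (2 + τ * x))) := by
    nth_rw 3 [← Real.mul_self_sqrt h2.le]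
    field_simp [(Real.sqrt_pos.2 h2).ne']
  rw [hsqrt, profileKernelDeriv, profileKernel]
  field_simp
  ring

lemma profileKernelDeriv_mem_Icc (hτ : 0 ≤ τ) (hx : x ∈ Icc (0 : ℝ) 1) :
    profileKernelDeriv τ x ∈ Icc 0 (5 / 2 * profileKernel τ x) := by
  obtain ⟨hx0, hx1⟩ := hx
  have hk : 0 ≤ profileKernel τ x := by unfold profileKernel; positivity
  have hτx : 0 ≤ τ * x := mul_nonneg hτ hx0
  refine ⟨mul_nonneg hk (by positivity), ?_⟩
  rw [profileKernelDeriv, mul_comm (5 / 2)]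
  refine mul_le_mul_of_nonneg_left ?_ hk
  have hfst : 2 * x / (1 + τ * x) ≤ 2 := by rw [div_le_iff₀ (by positivity)]; linarith
  have hsnd : x / (2 * (2 + τ * x)) ≤ 1 / 2 := by rw [div_le_iff₀ (by positivity)]; linarith
  linarith

lemma exists_hasDerivAt_profile (hσ : 0 ≤ σ) (hτ : 0 < τ) :
    ∃ d ∈ Icc 0 (5 / 2 * profile σ τ), HasDerivAt (profile σ) d τ := by
  have hmem : ∀ {x}, x ∈ uIoc (0 : ℝ) 1 → x ∈ Icc (0 : ℝ) 1 := fun hx => by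
    rw [uIoc_of_le zero_le_one] at hx
    exact Ioc_subset_Icc_self hx
  have hmeas : Measurable fun x => √x * (1 - x) ^ σ * profileKernelDeriv τ x := by
    unfold profileKernelDeriv profileKernel
    fun_prop
  obtain ⟨hint, hderiv⟩ := intervalIntegral.hasDerivAt_integral_of_dominated_loc_of_deriv_le
    (F := fun t x => √x * (1 - x) ^ σ * profileKernel t x)
    (F' := fun t x => √x * (1 - x) ^ σ * profileKernelDeriv t x)
    (bound := fun x => √x * (1 - x) ^ σ * profileKernel (τ + 1) x * (5 / 2))
    (Ioo_mem_nhds hτ (lt_add_one τ))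
    (Eventually.of_forall fun t => (intervalIntegrable_profile hσ t).def'.aestronglyMeasurable)
    (intervalIntegrable_profile hσ τ) hmeas.aestronglyMeasurable
    (Eventually.of_forall fun x hx t ht => by
      have hw := profile_weight_nonneg σ (hmem hx)
      have hd := profileKernelDeriv_mem_Icc ht.1.le (hmem hx)
      have hk := profileKernel_mono ht.1.le ht.2.le (hmem hx).1
      rw [Real.norm_of_nonneg (mul_nonneg hw hd.1), mul_assoc _ (profileKernel _ _)]
      exact mul_le_mul_of_nonneg_left (by linarith [hd.2]) hw)
    ((intervalIntegrable_profile hσ (τ + 1)).mul_const _)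
    (Eventually.of_forall fun x hx t ht => (hasDerivAt_profileKernel
      (by linarith [mul_nonneg ht.1.le (hmem hx).1])).const_mul _)
  refine ⟨_, ⟨intervalIntegral.integral_nonneg zero_le_one fun x hx => ?_, ?_⟩, hderiv⟩
  · exact mul_nonneg (profile_weight_nonneg σ hx) (profileKernelDeriv_mem_Icc hτ.le hx).1
  · rw [profile, ← intervalIntegral.integral_const_mul]
    refine intervalIntegral.integral_mono_on zero_le_one hint
      ((intervalIntegrable_profile hσ τ).const_mul _) fun x hx => ?_
    rw [mul_left_comm]
    exact mul_le_mul_of_nonneg_left (profileKernelDeriv_mem_Icc hτ.le hx).2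
      (profile_weight_nonneg σ hx)

lemma image_sqrt_one_add_sq_sub_one_div (hτ : 0 < τ) :
    (fun ξ : ℝ => (√(1 + ξ ^ 2) - 1) / τ) '' Ioi 0 = Ioi 0 := by
  ext x
  constructor
  · rintro ⟨ξ, hξ, rfl⟩
    have hξ2 : 0 < ξ ^ 2 := pow_pos hξ 2
    exact div_pos (sub_pos.2 (Real.lt_sqrt_of_sq_lt (by linarith))) hτ
  · intro hx
    have hτx : 0 < τ * x := mul_pos hτ hx
    refine ⟨√((1 + τ * x) ^ 2 - 1), Real.sqrt_pos.2 (by nlinarith), ?_⟩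
    dsimp only
    rw [Real.sq_sqrt (by nlinarith), add_sub_cancel, Real.sqrt_sq (by positivity)]
    field_simp
    ring

lemma integral_sq_mul_sqrt_mul_comp (hτ : 0 < τ) (h : ℝ → ℝ) :
    ∫ ξ in Ioi (0 : ℝ), ξ ^ 2 * √(1 + ξ ^ 2) * h √(1 + ξ ^ 2) =
      τ * √τ * ∫ x in Ioi (0 : ℝ), √x * profileKernel τ x * h (1 + τ * x) := by
  have hderiv : ∀ ξ ∈ Ioi (0 : ℝ), HasDerivWithinAt (fun ξ : ℝ => (√(1 + ξ ^ 2) - 1) / τ)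
      (ξ / √(1 + ξ ^ 2) / τ) (Ioi 0) ξ := fun ξ _ => by
    have hsq : HasDerivAt (fun ξ : ℝ => 1 + ξ ^ 2) (2 * ξ) ξ := by
      simpa using (hasDerivAt_pow 2 ξ).const_add 1
    refine (((hsq.sqrt (by positivity)).sub_const 1).div_const τ).hasDerivWithinAt.congr_deriv ?_
    rw [mul_div_mul_left _ _ two_ne_zero]
  have hmono : MonotoneOn (fun ξ : ℝ => (√(1 + ξ ^ 2) - 1) / τ) (Ioi 0) := fun a ha b _ hab => by
    have ha0 : 0 ≤ a := le_of_lt ha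
    dsimp only
    gcongr
  have hsubst := integral_image_eq_integral_deriv_smul_of_monotoneOn measurableSet_Ioi hderiv hmono
    fun x => √x * profileKernel τ x * h (1 + τ * x)
  rw [image_sqrt_one_add_sq_sub_one_div hτ] at hsubst
  rw [hsubst, ← integral_const_mul]
  refine setIntegral_congr_fun measurableSet_Ioi fun ξ hξ => ?_
  have hξ0 : 0 < ξ := hξ
  have hw : 1 ≤ √(1 + ξ ^ 2) := Real.one_le_sqrt.2 (by linarith [sq_nonneg ξ])
  have hw2 : √(1 + ξ ^ 2) ^ 2 = 1 + ξ ^ 2 := Real.sq_sqrt (by positivity)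
  simp only [profileKernel, smul_eq_mul]
  set w := √(1 + ξ ^ 2)
  have hw_eq : τ * ((w - 1) / τ) = w - 1 := mul_div_cancel₀ _ hτ.ne'
  have hξ_eq : √τ * √((w - 1) / τ) * √(w + 1) = ξ := by
    rw [← Real.sqrt_mul hτ.le, hw_eq, ← Real.sqrt_mul (sub_nonneg.2 hw),
      show (w - 1) * (w + 1) = ξ ^ 2 by linear_combination hw2, Real.sqrt_sq hξ0.le]
  rw [hw_eq, show 1 + (w - 1) = w by ring, show 2 + (w - 1) = w + 1 by ring]
  calc ξ ^ 2 * w * h w = ξ * w * h w * ξ := by ring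
    _ = ξ * w * h w * (√τ * √((w - 1) / τ) * √(w + 1)) := by rw [hξ_eq]
    _ = _ := by field_simp

lemma integral_Ioi_max_rpow_eq_profile (hσ : 0 < σ) (τ : ℝ) :
    ∫ x in Ioi (0 : ℝ), √x * profileKernel τ x * max (1 - x) 0 ^ σ = profile σ τ := by
  have hcut : ∫ x in Ioi (0 : ℝ), √x * profileKernel τ x * max (1 - x) 0 ^ σ =
      ∫ x in Ioc (0 : ℝ) 1, √x * profileKernel τ x * max (1 - x) 0 ^ σ := by
    refine setIntegral_eq_of_subset_of_forall_sdiff_eq_zero measurableSet_Ioi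
      Ioc_subset_Ioi_self fun x hx => ?_
    have hx1 : 1 < x := lt_of_not_ge fun h => hx.2 ⟨hx.1, h⟩
    rw [max_eq_right (sub_nonpos.2 hx1.le), Real.zero_rpow hσ.ne', mul_zero]
  rw [hcut, profile, intervalIntegral.integral_of_le zero_le_one]
  refine setIntegral_congr_fun measurableSet_Ioc fun x hx => ?_
  rw [max_eq_left (sub_nonneg.2 hx.2), mul_right_comm]

end Profile

section ClosedForm

variable {σ e : ℝ}

/-- The closed form of `-G'` on `(0, 1)` for `α = 1`. The exponent `σ + 3 / 2` is its order of
vanishing at the threshold `e = 1`. -/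
noncomputable def negSlope (σ e : ℝ) : ℝ :=
  (σ + 1) * ((1 - e) ^ (σ + 3 / 2) * e ^ (-(3 / 2) : ℝ) * profile σ (1 / e - 1))

lemma one_div_sub_one_pos (he : e ∈ Ioo (0 : ℝ) 1) : 0 < 1 / e - 1 :=
  sub_pos.2 (one_lt_one_div he.1 he.2)

lemma GderivFun_one_eq_neg_negSlope (hσ : 0 < σ) (he : e ∈ Ioo (0 : ℝ) 1) :
    GderivFun σ 1 e = -negSlope σ e := by
  have hτ := one_div_sub_one_pos he
  obtain ⟨he0, he1⟩ := he
  have hδ : 0 < 1 - e := sub_pos.2 he1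
  have hcut : ∀ x, max (1 - e * (1 + (1 / e - 1) * x)) 0 ^ σ =
      (1 - e) ^ σ * max (1 - x) 0 ^ σ := fun x => by
    rw [← Real.mul_rpow hδ.le (le_max_right _ _), mul_max_of_nonneg _ _ hδ.le, mul_zero]
    congr 2
    field_simp
    ring
  have hpow : (1 / e - 1) * √(1 / e - 1) * (1 - e) ^ σ =
      (1 - e) ^ (σ + 3 / 2) * e ^ (-(3 / 2) : ℝ) := by
    have hmul : (1 / e - 1) * √(1 / e - 1) = (1 / e - 1) ^ (3 / 2 : ℝ) := by
      rw [Real.sqrt_eq_rpow, ← Real.rpow_one_add' hτ.le (by norm_num)]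
      norm_num
    rw [hmul, show 1 / e - 1 = (1 - e) / e by field_simp, Real.div_rpow hδ.le he0.le,
      Real.rpow_neg he0.le, Real.rpow_add hδ]
    ring
  rw [GderivFun, integral_sq_mul_sqrt_mul_comp hτ fun w => max (1 - e * w) 0 ^ σ]
  simp only [hcut, mul_left_comm _ ((1 - e) ^ σ), integral_const_mul,
    integral_Ioi_max_rpow_eq_profile hσ]
  rw [negSlope, ← hpow]
  ring

lemma negSlope_pos (hσ : 0 ≤ σ) (he : e ∈ Ioo (0 : ℝ) 1) : 0 < negSlope σ e := by
  have hprofile := profile_pos hσ (one_div_sub_one_pos he).le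
  have he0 := he.1
  have hδ : 0 < 1 - e := sub_pos.2 he.2
  unfold negSlope
  positivity

lemma hasDerivAt_negSlope {d : ℝ} (hσ : 0 ≤ σ) (he : e ∈ Ioo (0 : ℝ) 1)
    (hd : HasDerivAt (profile σ) d (1 / e - 1)) :
    HasDerivAt (negSlope σ) (-(negSlope σ e * ((σ + 3 / 2) / (1 - e) + 3 / (2 * e) +
      d / (profile σ (1 / e - 1) * e ^ 2)))) e := by
  have hprofile := profile_pos hσ (one_div_sub_one_pos he).le
  obtain ⟨he0, he1⟩ := he
  have hδ : 0 < 1 - e := sub_pos.2 he1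
  have hfst : HasDerivAt (fun y : ℝ => (1 - y) ^ (σ + 3 / 2))
      (-(1 - e) ^ (σ + 3 / 2) * ((σ + 3 / 2) / (1 - e))) e := by
    refine (((hasDerivAt_id e).const_sub 1).rpow_const (Or.inl hδ.ne')).congr_deriv ?_
    rw [id, Real.rpow_sub_one hδ.ne']
    ring
  have hsnd : HasDerivAt (fun y : ℝ => y ^ (-(3 / 2) : ℝ))
      (-e ^ (-(3 / 2) : ℝ) * (3 / (2 * e))) e := by
    refine (Real.hasDerivAt_rpow_const (Or.inl he0.ne')).congr_deriv ?_
    rw [Real.rpow_sub_one he0.ne']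
    ring
  have hthd : HasDerivAt (fun y : ℝ => profile σ (1 / y - 1)) (-(d / e ^ 2)) e := by
    have hτ : HasDerivAt (fun y : ℝ => 1 / y - 1) (-(e ^ 2)⁻¹) e := by
      simpa using (hasDerivAt_inv he0.ne').sub_const 1
    refine (hd.comp e hτ).congr_deriv ?_
    rw [mul_neg, div_eq_mul_inv]
  refine (((hfst.mul hsnd).mul hthd).const_mul (σ + 1)).congr_deriv ?_
  simp only [negSlope, Pi.mul_apply]
  generalize profile σ (1 / e - 1) = N at hprofile ⊢
  field_simp
  ring

lemma neg_deriv_negSlope_mem_Icc (hσ : 0 ≤ σ) (he : e ∈ Ioo (0 : ℝ) 1) :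
    -deriv (negSlope σ) e ∈ Icc (negSlope σ e * ((σ + 3 / 2) / (1 - e)))
      (negSlope σ e * ((σ + 3 / 2 + 3 / (2 * e) + 5 / (2 * e ^ 2)) / (1 - e))) := by
  have hτ := one_div_sub_one_pos he
  have hprofile := profile_pos hσ hτ.le
  have hs := (negSlope_pos hσ he).le
  obtain ⟨d, ⟨hd0, hd1⟩, hd⟩ := exists_hasDerivAt_profile hσ hτ
  rw [(hasDerivAt_negSlope hσ he hd).deriv, neg_neg]
  obtain ⟨he0, he1⟩ := he
  constructor <;> refine mul_le_mul_of_nonneg_left ?_ hs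
  · rw [add_assoc]
    exact le_add_of_nonneg_right (by positivity)
  · have hlog : d / (profile σ (1 / e - 1) * e ^ 2) ≤ 5 / (2 * e ^ 2) := by
      rw [div_le_div_iff₀ (by positivity) (by positivity)]
      nlinarith [mul_le_mul_of_nonneg_right hd1 (sq_nonneg e)]
    have hdiv : ∀ y : ℝ, 0 ≤ y → y ≤ y / (1 - e) := fun y hy =>
      le_div_self hy (sub_pos.2 he1) (by linarith)
    rw [add_div _ (5 / (2 * e ^ 2)), add_div _ (3 / (2 * e))]
    exact add_le_add (add_le_add le_rfl (hdiv _ (by positivity)))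
      (hlog.trans (hdiv _ (by positivity)))

lemma deriv_negSlope_neg (hσ : 0 ≤ σ) (he : e ∈ Ioo (0 : ℝ) 1) : deriv (negSlope σ) e < 0 := by
  have hδ : 0 < (σ + 3 / 2) / (1 - e) := div_pos (by positivity) (sub_pos.2 he.2)
  exact neg_pos.1 ((mul_pos (negSlope_pos hσ he) hδ).trans_le (neg_deriv_negSlope_mem_Icc hσ he).1)

lemma deriv_GderivFun_one (hσ : 0 < σ) (he : e ∈ Ioo (0 : ℝ) 1) :
    deriv (GderivFun σ 1) e = -deriv (negSlope σ) e := by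
  have heq : GderivFun σ 1 =ᶠ[𝓝 e] fun y => -negSlope σ y := by
    filter_upwards [isOpen_Ioo.mem_nhds he] with y hy using GderivFun_one_eq_neg_negSlope hσ hy
  rw [heq.deriv_eq, deriv.fun_neg]

lemma deriv_deriv_legendreIoi_Gfun_one (hσ : 0 < σ) (he : e ∈ Ioo (0 : ℝ) 1) :
    deriv (deriv (legendreIoi (Gfun σ 1))) (-negSlope σ e) = (-deriv (negSlope σ) e)⁻¹ := by
  rw [← GderivFun_one_eq_neg_negSlope hσ he, ← deriv_GderivFun_one hσ he]
  refine deriv_deriv_legendreIoi (convexOn_Gfun hσ 1) isOpen_Ioo (convex_Ioo 0 1)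
    Ioo_subset_Ioi_self (fun y hy => hasDerivAt_Gfun hσ 1 hy.1) (fun y hy => ?_) he
  rw [deriv_GderivFun_one hσ hy]
  exact neg_pos.2 (deriv_negSlope_neg hσ.le hy)

end ClosedForm

section Bounds

variable {σ e e₀ t : ℝ}

lemma exists_mul_le_negSlope (hσ : 0 ≤ σ) :
    ∃ c, 0 < c ∧ ∀ e ∈ Ioo (0 : ℝ) 1, c * (1 - e) ^ (σ + 3 / 2) * (e ^ 4)⁻¹ ≤ negSlope σ e := by
  obtain ⟨c, hc, hle⟩ := exists_mul_rpow_five_halves_le_profile hσ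
  refine ⟨(σ + 1) * c, by positivity, fun e he => ?_⟩
  have hprofile := hle (1 / e - 1) (one_div_sub_one_pos he).le
  obtain ⟨he0, he1⟩ := he
  have hδ : 0 ≤ (1 - e) ^ (σ + 3 / 2) := Real.rpow_nonneg (sub_nonneg.2 he1.le) _
  have hpow : (e ^ 4)⁻¹ = e ^ (-(3 / 2) : ℝ) * (1 + (1 / e - 1)) ^ (5 / 2 : ℝ) := by
    rw [add_sub_cancel, one_div, Real.inv_rpow he0.le, ← Real.rpow_neg he0.le,
      ← Real.rpow_add he0, ← Real.rpow_natCast, ← Real.rpow_neg he0.le]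
    norm_num
  calc (σ + 1) * c * (1 - e) ^ (σ + 3 / 2) * (e ^ 4)⁻¹
      = (σ + 1) * ((1 - e) ^ (σ + 3 / 2) * e ^ (-(3 / 2) : ℝ) *
          (c * (1 + (1 / e - 1)) ^ (5 / 2 : ℝ))) := by rw [hpow]; ring
    _ ≤ negSlope σ e := by
      refine mul_le_mul_of_nonneg_left ?_ (by positivity)
      exact mul_le_mul_of_nonneg_left hprofile (mul_nonneg hδ (by positivity))

lemma negSlope_le (hσ : 0 ≤ σ) (he₀ : 0 < e₀) (he : e ∈ Ico e₀ 1) :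
    negSlope σ e ≤
      (σ + 1) * (e₀ ^ (-(3 / 2) : ℝ) * profile σ (1 / e₀ - 1)) * (1 - e) ^ (σ + 3 / 2) := by
  obtain ⟨hle, he1⟩ := he
  have hδ : 0 ≤ (1 - e) ^ (σ + 3 / 2) := Real.rpow_nonneg (sub_nonneg.2 he1.le) _
  have he : e ∈ Ioo (0 : ℝ) 1 := ⟨he₀.trans_le hle, he1⟩
  have hτ : 1 / e - 1 ≤ 1 / e₀ - 1 := sub_le_sub_right (one_div_le_one_div_of_le he₀ hle) 1
  have hτ0 := (one_div_sub_one_pos he).le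
  have hpow : e ^ (-(3 / 2) : ℝ) ≤ e₀ ^ (-(3 / 2) : ℝ) :=
    Real.rpow_le_rpow_of_nonpos he₀ hle (by norm_num)
  have hprofile := monotoneOn_profile hσ hτ0 (hτ0.trans hτ) hτ
  have hprofile0 := (profile_pos hσ hτ0).le
  rw [negSlope, mul_assoc (σ + 1), mul_comm _ ((1 - e) ^ _), mul_assoc ((1 - e) ^ _)]
  refine mul_le_mul_of_nonneg_left (mul_le_mul_of_nonneg_left ?_ hδ) (by positivity)
  gcongr

lemma continuousOn_negSlope (hσ : 0 ≤ σ) : ContinuousOn (negSlope σ) (Ioi 0) := by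
  intro e he
  have he0 : e ≠ 0 := ne_of_gt he
  have hfst : ContinuousAt (fun y : ℝ => (1 - y) ^ (σ + 3 / 2)) e :=
    (continuousAt_const.sub continuousAt_id).rpow_const (Or.inr (by positivity))
  have hthd : ContinuousAt (fun y : ℝ => profile σ (1 / y - 1)) e :=
    (continuous_profile hσ).continuousAt.comp
      ((continuousAt_const.div continuousAt_id he0).sub continuousAt_const)
  exact (((hfst.mul (Real.continuousAt_rpow_const e _ (Or.inl he0))).mul
    hthd).const_mul (σ + 1)).continuousWithinAt

lemma tendsto_negSlope_nhdsGT_zero (hσ : 0 ≤ σ) : Tendsto (negSlope σ) (𝓝[>] 0) atTop := by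
  obtain ⟨c, hc, hle⟩ := exists_mul_le_negSlope hσ
  have hfst : Tendsto (fun e : ℝ => c * (1 - e) ^ (σ + 3 / 2)) (𝓝[>] 0) (𝓝 c) := by
    have hcont : ContinuousAt (fun e : ℝ => c * (1 - e) ^ (σ + 3 / 2)) 0 :=
      ((continuousAt_const.sub continuousAt_id).rpow_const (Or.inr (by positivity))).const_mul c
    simpa using hcont.tendsto.mono_left nhdsWithin_le_nhds
  have hsnd : Tendsto (fun e : ℝ => (e ^ 4)⁻¹) (𝓝[>] 0) atTop := by
    simpa [Function.comp_def] using
      (tendsto_pow_atTop (α := ℝ) four_ne_zero).comp tendsto_inv_nhdsGT_zero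
  refine tendsto_atTop_mono' _ ?_ (hfst.pos_mul_atTop hc hsnd)
  filter_upwards [Ioo_mem_nhdsGT one_pos] using hle

lemma exists_negSlope_eq (hσ : 0 ≤ σ) (ht : 0 < t) : ∃ e ∈ Ioo (0 : ℝ) 1, negSlope σ e = t := by
  have hone : negSlope σ 1 = 0 := by
    rw [negSlope, sub_self, Real.zero_rpow (by positivity), zero_mul, zero_mul, mul_zero]
  have hsurj : Ici (negSlope σ 1) ⊆ negSlope σ '' Ioc 0 1 :=
    isPreconnected_Ioc.intermediate_value_Ici (right_mem_Ioc.2 one_pos)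
      (le_principal_iff.2 (Ioc_mem_nhdsGT one_pos))
      ((continuousOn_negSlope hσ).mono Ioc_subset_Ioi_self) (tendsto_negSlope_nhdsGT_zero hσ)
  obtain ⟨e, ⟨he0, he1⟩, rfl⟩ := hsurj (hone.symm ▸ ht.le : negSlope σ 1 ≤ t)
  exact ⟨e, ⟨he0, he1.lt_of_ne fun h => ht.ne' (h ▸ hone)⟩, rfl⟩

lemma strictAntiOn_negSlope (hσ : 0 ≤ σ) : StrictAntiOn (negSlope σ) (Ioo 0 1) := by
  refine strictAntiOn_of_deriv_neg (convex_Ioo 0 1)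
    ((continuousOn_negSlope hσ).mono Ioo_subset_Ioi_self) fun e he => ?_
  exact deriv_negSlope_neg hσ (interior_subset he)

lemma rpow_neg_eq_rpow_inv_div (hσ : 0 ≤ σ) (ht : 0 < t) :
    t ^ (-((1 + 2 * σ) / (3 + 2 * σ))) = t ^ (σ + 3 / 2)⁻¹ / t := by
  rw [← Real.rpow_sub_one ht.ne']
  congr 1
  field_simp
  ring

lemma exists_one_sub_mem_Icc (hσ : 0 ≤ σ) (he₀ : e₀ ∈ Ioo (0 : ℝ) 1) :
    ∃ a b, 0 < a ∧ 0 < b ∧ ∀ e ∈ Ico e₀ 1,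
      1 - e ∈ Icc (a * negSlope σ e ^ (σ + 3 / 2)⁻¹) (b * negSlope σ e ^ (σ + 3 / 2)⁻¹) := by
  obtain ⟨A, hA, hle⟩ := exists_mul_le_negSlope hσ
  have he₀0 := he₀.1
  have hprofile := profile_pos hσ (one_div_sub_one_pos he₀).le
  have hB : 0 < (σ + 1) * (e₀ ^ (-(3 / 2) : ℝ) * profile σ (1 / e₀ - 1)) := by positivity
  refine ⟨_, A⁻¹ ^ (σ + 3 / 2)⁻¹, Real.rpow_pos_of_pos (inv_pos.2 hB) (σ + 3 / 2)⁻¹,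
    by positivity, fun e he => ?_⟩
  have hmem : e ∈ Ioo (0 : ℝ) 1 := ⟨he₀0.trans_le he.1, he.2⟩
  have hδ : 0 ≤ 1 - e := sub_nonneg.2 he.2.le
  have hs := (negSlope_pos hσ hmem).le
  have hp : 0 < σ + 3 / 2 := by positivity
  constructor
  · rw [← Real.mul_rpow (by positivity) hs, Real.rpow_inv_le_iff_of_pos (by positivity) hδ hp,
      inv_mul_le_iff₀ hB]
    exact negSlope_le hσ he₀0 he
  · rw [← Real.mul_rpow (by positivity) hs, Real.le_rpow_inv_iff_of_pos hδ (by positivity) hp,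
      le_inv_mul_iff₀ hA]
    refine le_trans ?_ (hle e hmem)
    exact le_mul_of_one_le_right (by positivity)
      ((one_le_inv₀ (pow_pos hmem.1 4)).2 (pow_le_one₀ hmem.1.le hmem.2.le))

lemma exists_neg_deriv_negSlope_mem_Icc (hσ : 0 ≤ σ) (he₀ : 0 < e₀) :
    ∃ K, 0 < K ∧ ∀ e ∈ Ico e₀ 1, -deriv (negSlope σ) e ∈
      Icc (negSlope σ e * ((σ + 3 / 2) / (1 - e))) (negSlope σ e * (K / (1 - e))) := by
  refine ⟨σ + 3 / 2 + 3 / (2 * e₀) + 5 / (2 * e₀ ^ 2), by positivity, fun e ⟨hle, he1⟩ => ?_⟩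
  have he : e ∈ Ioo (0 : ℝ) 1 := ⟨he₀.trans_le hle, he1⟩
  obtain ⟨hlow, hupp⟩ := neg_deriv_negSlope_mem_Icc hσ he
  refine ⟨hlow, hupp.trans (mul_le_mul_of_nonneg_left ?_ (negSlope_pos hσ he).le)⟩
  refine div_le_div_of_nonneg_right ?_ (sub_nonneg.2 he1.le)
  gcongr

lemma exists_deriv_deriv_legendreIoi_Gfun_bounds {T : ℝ} (hσ : 0 < σ) (hT : 0 < T) :
    ∃ c C, 0 < c ∧ 0 < C ∧ ∀ t ∈ Ioc 0 T, deriv (deriv (legendreIoi (Gfun σ 1))) (-t) ∈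
      Icc (c * t ^ (-((1 + 2 * σ) / (3 + 2 * σ)))) (C * t ^ (-((1 + 2 * σ) / (3 + 2 * σ)))) := by
  obtain ⟨e₀, he₀, rfl⟩ := exists_negSlope_eq hσ.le hT
  obtain ⟨a, b, ha, hb, hab⟩ := exists_one_sub_mem_Icc hσ.le he₀
  obtain ⟨K, hK, hderiv⟩ := exists_neg_deriv_negSlope_mem_Icc hσ.le he₀.1
  refine ⟨a / K, b / (σ + 3 / 2), by positivity, by positivity, fun t ⟨ht0, htT⟩ => ?_⟩
  rw [rpow_neg_eq_rpow_inv_div hσ.le ht0]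
  obtain ⟨e, he, rfl⟩ := exists_negSlope_eq hσ.le ht0
  have hle : e₀ ≤ e := ((strictAntiOn_negSlope hσ.le).le_iff_ge he he₀).1 htT
  obtain ⟨hal, hbl⟩ := hab e ⟨hle, he.2⟩
  obtain ⟨hlow, hupp⟩ := hderiv e ⟨hle, he.2⟩
  have hδ : 0 < 1 - e := sub_pos.2 he.2
  rw [deriv_deriv_legendreIoi_Gfun_one hσ he]
  constructor
  · calc a / K * (negSlope σ e ^ (σ + 3 / 2)⁻¹ / negSlope σ e)
        = a * negSlope σ e ^ (σ + 3 / 2)⁻¹ / (negSlope σ e * K) := by field_simp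
      _ ≤ (1 - e) / (negSlope σ e * K) := by gcongr
      _ = (negSlope σ e * (K / (1 - e)))⁻¹ := by field_simp
      _ ≤ (-deriv (negSlope σ) e)⁻¹ :=
        inv_anti₀ (neg_pos.2 (deriv_negSlope_neg hσ.le he)) hupp
  · calc (-deriv (negSlope σ) e)⁻¹ ≤ (negSlope σ e * ((σ + 3 / 2) / (1 - e)))⁻¹ := by gcongr
      _ = (1 - e) / (negSlope σ e * (σ + 3 / 2)) := by field_simp
      _ ≤ b * negSlope σ e ^ (σ + 3 / 2)⁻¹ / (negSlope σ e * (σ + 3 / 2)) := by gcongr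
      _ = b / (σ + 3 / 2) * (negSlope σ e ^ (σ + 3 / 2)⁻¹ / negSlope σ e) := by field_simp

end Bounds

section Main

variable {σ : ℝ}

lemma exists_GderivFun_le {κ : ℝ} (hσ : 0 < σ) (hκ : κ < 1) :
    ∃ c, 0 < c ∧ ∀ α, 0 < α → ∀ ε ∈ Ioc 0 (κ * α),
      GderivFun σ α ε ≤ -(c * ε ^ (-4 : ℝ) * α ^ (4 + σ)) := by
  obtain ⟨c, hc, hle⟩ := exists_mul_le_negSlope hσ.le
  have hκ0 : 0 < 1 - κ := sub_pos.2 hκ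
  refine ⟨c * (1 - κ) ^ (σ + 3 / 2), by positivity, fun α hα ε ⟨hε, hεκ⟩ => ?_⟩
  have he : ε / α ≤ κ := (div_le_iff₀ hα).2 hεκ
  have he' : ε / α ∈ Ioo (0 : ℝ) 1 := ⟨by positivity, he.trans_lt hκ⟩
  rw [GderivFun_scaling σ hα, GderivFun_one_eq_neg_negSlope hσ he', mul_neg, neg_le_neg_iff]
  calc c * (1 - κ) ^ (σ + 3 / 2) * ε ^ (-4 : ℝ) * α ^ (4 + σ)
      = α ^ σ * (c * (1 - κ) ^ (σ + 3 / 2) * ((ε / α) ^ 4)⁻¹) := by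
        rw [Real.rpow_neg hε.le, Real.rpow_add hα]
        norm_cast
        field_simp
    _ ≤ α ^ σ * (c * (1 - ε / α) ^ (σ + 3 / 2) * ((ε / α) ^ 4)⁻¹) := by gcongr
    _ ≤ α ^ σ * negSlope σ (ε / α) := by gcongr; exact hle _ he'

lemma exists_deriv_deriv_calG_bounds {T : ℝ} (hσ : 0 < σ) (hT : 0 < T) :
    ∃ c C, 0 < c ∧ c < C ∧ ∀ α, 0 < α → ∀ s ∈ Ioc 0 (T * α ^ σ),
      c * α ^ (3 / (3 + 2 * σ)) * s ^ (-((1 + 2 * σ) / (3 + 2 * σ))) ≤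
          deriv (deriv (calG σ α)) s ∧
        deriv (deriv (calG σ α)) s ≤
          C * α ^ (3 / (3 + 2 * σ)) * s ^ (-((1 + 2 * σ) / (3 + 2 * σ))) := by
  obtain ⟨c, C, hc, hC, hbounds⟩ := exists_deriv_deriv_legendreIoi_Gfun_bounds hσ hT
  refine ⟨c, c + C, hc, lt_add_of_pos_right c hC, fun α hα s ⟨hs0, hsT⟩ => ?_⟩
  have ht : α ^ (-σ) * s ∈ Ioc 0 T := by
    refine ⟨by positivity, ?_⟩
    rwa [Real.rpow_neg hα.le, inv_mul_le_iff₀ (by positivity), mul_comm]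
  have hscale : ∀ k : ℝ, k * α ^ (3 / (3 + 2 * σ)) * s ^ (-((1 + 2 * σ) / (3 + 2 * σ))) =
      α ^ (1 - σ) * (k * (α ^ (-σ) * s) ^ (-((1 + 2 * σ) / (3 + 2 * σ)))) := fun k => by
    have hexp : 3 / (3 + 2 * σ) = 1 - σ + -σ * -((1 + 2 * σ) / (3 + 2 * σ)) := by
      field_simp
      ring
    rw [Real.mul_rpow (by positivity) hs0.le, ← Real.rpow_mul hα.le, hexp, Real.rpow_add hα]
    ring
  obtain ⟨hlow, hupp⟩ := hbounds _ ht
  rw [deriv_deriv_calG_scaling σ hα, hscale, hscale, neg_mul]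
  refine ⟨by gcongr, ?_⟩
  gcongr
  refine hupp.trans ?_
  gcongr
  exact le_add_of_nonneg_left hc.le

end Main

theorem stmt_15_general {σ : ℝ} (hσ : 0 < σ) :
    (∃ c₃', 0 < c₃' ∧ ∀ α : ℝ, 0 < α → ∀ ε ∈ Ioc 0 (α / √2),
      GderivFun σ α ε ≤ -(c₃' * ε ^ (-4 : ℝ) * α ^ (4 + σ))) ∧
    ∀ c₃', 0 < c₃' → ∃ c₃ c₄, 0 < c₃ ∧ c₃ < c₄ ∧
      ∀ α : ℝ, 0 < α → ∀ s ∈ Ioc 0 (2 * c₃' * α ^ σ),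
        c₃ * α ^ (3 / (3 + 2 * σ)) * s ^ (-((1 + 2 * σ) / (3 + 2 * σ))) ≤
            deriv (deriv (calG σ α)) s ∧
          deriv (deriv (calG σ α)) s ≤
            c₄ * α ^ (3 / (3 + 2 * σ)) * s ^ (-((1 + 2 * σ) / (3 + 2 * σ))) := by
  refine ⟨?_, fun c₃' hc₃' => exists_deriv_deriv_calG_bounds hσ (by positivity)⟩
  have hsqrt : (√2)⁻¹ < 1 := inv_lt_one_of_one_lt₀ (Real.lt_sqrt_of_sq_lt (by norm_num))
  simpa only [div_eq_inv_mul] using exists_GderivFun_le hσ hsqrt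

/-- There are α-independent constants `c₃* > 0`, `c₄ > c₃ > 0`, where `c₃*` satisfies
`G'(ε) ≤ −c₃* ε^{−4} α^{4+σ}` on `(0, α/√2]`, such that with `s₀ = 2 c₃* α^σ` one has
`c₃ α^{3/(3+2σ)} s^{−(1+2σ)/(3+2σ)} ≤ 𝒢''(s) ≤ c₄ α^{3/(3+2σ)} s^{−(1+2σ)/(3+2σ)}`
for all `s ∈ (0, s₀]`. -/
theorem stmt_15 (σ : ℝ) (hσ : σ ∈ Set.Ioo (0:ℝ) (3/2)) :
    ∃ c₃' c₃ c₄ : ℝ, 0 < c₃' ∧ 0 < c₃ ∧ c₃ < c₄ ∧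
      (∀ α : ℝ, 0 < α → ∀ ε ∈ Set.Ioc (0:ℝ) (α / Real.sqrt 2),
        GderivFun σ α ε ≤ -(c₃' * ε ^ (-(4:ℝ)) * α ^ (4 + σ))) ∧
      (∀ α : ℝ, 0 < α → ∀ s ∈ Set.Ioc (0:ℝ) (2 * c₃' * α ^ σ),
        c₃ * α ^ ((3:ℝ) / (3 + 2 * σ)) * s ^ (-((1 + 2 * σ) / (3 + 2 * σ)))
          ≤ deriv (deriv (calG σ α)) s ∧
        deriv (deriv (calG σ α)) s
          ≤ c₄ * α ^ ((3:ℝ) / (3 + 2 * σ)) * s ^ (-((1 + 2 * σ) / (3 + 2 * σ)))) := by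
  obtain ⟨⟨c₃', hc₃', hG⟩, hbounds⟩ := stmt_15_general hσ.1
  obtain ⟨c₃, c₄, hc₃, hc₄, h⟩ := hbounds c₃' hc₃'
  exact ⟨c₃', c₃, c₄, hc₃', hc₃, hc₄, hG, h⟩
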